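/- arXiv:2411.12898 — 3 statements merged into one kernel-verified Lean document; each statement's English description precedes it below -/
import Mathlib

section
/- Let m ≥ 2, 1 ≤ k ≤ m, and let A be a real symmetric m×m matrix. Let Q be the random m×k matrix consisting of the first k columns of an m×m random orthogonal matrix distributed according to the Haar probability measure on the orthogonal group O(m). Then E[Q Qᵀ A Q Qᵀ] = (k/m)(1−β)·A + (tr A)·(k/m²)·β·I, where β = m(m−k)/((m+2)(m−1)) and I is the m×m identity matrix. -/
open Matrix MeasureTheory

/-- The first `k` columns of an `m × m` matrix (given as a function). -/
def firstCols {m : ℕ} (k : ℕ) (hkm : k ≤ m) (Q : Fin m → Fin m → ℝ) :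
    Matrix (Fin m) (Fin k) ℝ :=
  (Matrix.of Q).submatrix id (Fin.castLE hkm)

/-! The map `A ↦ E[P A P]`, with `P = Q Qᵀ`, is linear and commutes with conjugation by orthogonal
matrices. By the spectral theorem such a map is determined on symmetric matrices by its values on
the matrix units `E i i`; invariance under sign changes and permutations of the coordinates forces
`E i i ↦ a • E i i + b • 1`, hence `A ↦ a • A + (b * tr A) • 1` for symmetric `A`. The two constants
are found by evaluating `E[tr P²] = k` and `E[(tr P)² + tr P²] = k² + k` through this formula: for
`Φ A = E[P A P]` these are `tr (Φ 1)` and the sum of the entries `Φ (E i j + E j i) i j`. -/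

open ProbabilityTheory
open scoped ENNReal

lemma mul_single_mul_apply {l m n o R : Type*} [Fintype m] [Fintype n] [DecidableEq m]
    [DecidableEq n] [NonUnitalNonAssocSemiring R] (X : Matrix l m R) (Y : Matrix n o R)
    (a : m) (b : n) (c : R) (i : l) (j : o) :
    (X * single a b c * Y : Matrix l o R) i j = X i a * c * Y b j := by
  rw [mul_apply, Finset.sum_eq_single b (fun x _ hx => by simp [mul_single_apply_of_ne, hx])
    (by simp), mul_single_apply_same]

lemma diagonal_mem_orthogonalGroup {n R : Type*} [Fintype n] [DecidableEq n] [CommRing R]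
    {d : n → R} (hd : ∀ i, d i * d i = 1) : diagonal d ∈ orthogonalGroup n R := by
  simp [mem_orthogonalGroup_iff, hd]

lemma permMatrix_mem_orthogonalGroup {n R : Type*} [Fintype n] [DecidableEq n] [CommRing R]
    (σ : Equiv.Perm n) : σ.permMatrix R ∈ orthogonalGroup n R := by
  rw [mem_orthogonalGroup_iff, transpose_permMatrix, ← permMatrix_mul, inv_mul_cancel,
    permMatrix_one]

lemma permMatrix_mul_mul_transpose {n R : Type*} [Fintype n] [DecidableEq n] [NonAssocSemiring R]
    (σ : Equiv.Perm n) (A : Matrix n n R) :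
    σ.permMatrix R * A * (σ.permMatrix R)ᵀ = A.submatrix σ σ := by
  rw [transpose_permMatrix, Equiv.Perm.permMatrix, Equiv.Perm.permMatrix,
    PEquiv.toMatrix_toPEquiv_mul, PEquiv.mul_toMatrix_toPEquiv]
  rfl

lemma exists_eq_ite_of_perm_invariant {α R : Type*} [DecidableEq α] [AddGroup R] (c : α → α → R)
    (hc : ∀ (σ : Equiv.Perm α) i j, c (σ i) (σ j) = c i j) :
    ∃ a b, ∀ i j, c i j = (if i = j then a else 0) + b := by
  obtain ⟨diag, hdiag⟩ : ∃ diag, ∀ i, c i i = diag := by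
    rcases isEmpty_or_nonempty α with _ | ⟨⟨i₀⟩⟩
    · exact ⟨0, isEmptyElim⟩
    · refine ⟨c i₀ i₀, fun i => ?_⟩
      simpa using hc (Equiv.swap i₀ i) i₀ i₀
  obtain ⟨offDiag, hoffDiag⟩ : ∃ offDiag, ∀ i j, i ≠ j → c i j = offDiag := by
    by_cases h : ∃ i₀ j₀ : α, i₀ ≠ j₀
    · obtain ⟨i₀, j₀, h₀⟩ := h
      refine ⟨c i₀ j₀, fun i j hij => ?_⟩
      obtain ⟨σ, rfl, rfl⟩ := MulAction.is_two_pretransitive_iff.1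
        (Equiv.Perm.isMultiplyPretransitive α 2) h₀ hij
      exact hc σ i₀ j₀
    · exact ⟨0, fun i j hij => (h ⟨i, j, hij⟩).elim⟩
  refine ⟨diag - offDiag, offDiag, fun i j => ?_⟩
  split_ifs with hij
  · rw [← hij, hdiag, sub_add_cancel]
  · rw [hoffDiag i j hij, zero_add]

section Equivariant

variable {n : Type*} [Fintype n] [DecidableEq n]

/-- A linear map on square matrices that commutes with conjugation by orthogonal matrices. -/
def IsOrthogonallyEquivariant (Φ : Matrix n n ℝ →ₗ[ℝ] Matrix n n ℝ) : Prop :=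
  ∀ U ∈ orthogonalGroup n ℝ, ∀ A, Φ (U * A * Uᵀ) = U * Φ A * Uᵀ

namespace IsOrthogonallyEquivariant

variable {Φ : Matrix n n ℝ →ₗ[ℝ] Matrix n n ℝ} (hΦ : IsOrthogonallyEquivariant Φ)

include hΦ

lemma map_single_apply_of_ne (i : n) {p q : n} (hpq : p ≠ q) : Φ (single i i 1) p q = 0 := by
  let ε : n → ℝ := fun x => if x = p then -1 else 1
  have hε : ∀ x, ε x * ε x = 1 := fun x => by grind
  have hfix : diagonal ε * single i i 1 * (diagonal ε)ᵀ = single i i 1 := by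
    ext x y
    simp only [diagonal_transpose, diagonal_mul, mul_diagonal]
    grind
  have hflip := congr($(hΦ _ (diagonal_mem_orthogonalGroup hε) (single i i 1)) p q)
  rw [hfix] at hflip
  simp only [diagonal_transpose, diagonal_mul, mul_diagonal, ε, if_true, if_neg hpq.symm] at hflip
  linarith

lemma map_single_apply_perm (σ : Equiv.Perm n) (i p : n) :
    Φ (single (σ i) (σ i) 1) (σ p) (σ p) = Φ (single i i 1) p p := by
  have h := congr($(hΦ _ (permMatrix_mem_orthogonalGroup σ) (single (σ i) (σ i) 1)) p p)
  simpa only [permMatrix_mul_mul_transpose, submatrix_single_equiv, Equiv.symm_apply_apply,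
    submatrix_apply] using h.symm

theorem exists_map_single :
    ∃ a b : ℝ, ∀ i, Φ (single i i 1) = a • single i i 1 + b • 1 := by
  obtain ⟨a, b, hab⟩ := exists_eq_ite_of_perm_invariant (fun i p => Φ (single i i 1) p p)
    hΦ.map_single_apply_perm
  refine ⟨a, b, fun i => ?_⟩
  ext p q
  rcases eq_or_ne p q with rfl | hpq
  · simp [hab, single_apply]
  · have hsingle : single i i (1 : ℝ) p q = 0 := single_apply_of_ne _ _ _ _ _ (by grind)
    rw [hΦ.map_single_apply_of_ne i hpq, Matrix.add_apply, Matrix.smul_apply, Matrix.smul_apply,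
      hsingle, one_apply_ne hpq, smul_zero, smul_zero, add_zero]

theorem exists_map_diagonal :
    ∃ a b : ℝ, ∀ d : n → ℝ, Φ (diagonal d) = a • diagonal d + (b * ∑ i, d i) • 1 := by
  obtain ⟨a, b, hab⟩ := hΦ.exists_map_single
  refine ⟨a, b, fun d => ?_⟩
  have hd : diagonal d = ∑ i, d i • single i i (1 : ℝ) := by
    simp [smul_single, sum_single_eq_diagonal]
  simp only [hd, map_sum, map_smul, hab, smul_add, Finset.sum_add_distrib, Finset.smul_sum,
    smul_smul, ← Finset.sum_smul, Finset.mul_sum, mul_comm]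

theorem exists_map_isSymm :
    ∃ a b : ℝ, ∀ A : Matrix n n ℝ, A.IsSymm → Φ A = a • A + (b * A.trace) • 1 := by
  obtain ⟨a, b, hab⟩ := hΦ.exists_map_diagonal
  refine ⟨a, b, fun A hA => ?_⟩
  obtain ⟨U, hU, d, rfl⟩ : ∃ U ∈ orthogonalGroup n ℝ, ∃ d, A = U * diagonal d * Uᵀ :=
    have hA' : A.IsHermitian := isHermitian_iff_isSymm.2 hA
    ⟨hA'.eigenvectorUnitary, hA'.eigenvectorUnitary.2, _, hA'.spectral_theorem⟩
  rw [hΦ U hU, hab, trace_mul_comm, ← mul_assoc, (mem_orthogonalGroup_iff' n ℝ).1 hU, one_mul,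
    trace_diagonal, mul_add, add_mul, mul_smul_comm, smul_mul_assoc, mul_smul_comm, mul_one,
    smul_mul_assoc, (mem_orthogonalGroup_iff n ℝ).1 hU]

theorem map_isSymm [Nontrivial n] {m s w : ℝ} (hm : Fintype.card n = m) (hs : (Φ 1).trace = s)
    (hw : ∑ i, ∑ j, Φ (single i j 1 + single j i 1) i j = w) {A : Matrix n n ℝ} (hA : A.IsSymm) :
    Φ A = ((m * w - 2 * s) / (m * (m + 2) * (m - 1))) • A +
      (((m + 1) * s - w) / (m * (m + 2) * (m - 1)) * A.trace) • 1 := by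
  obtain ⟨a, b, hab⟩ := hΦ.exists_map_isSymm
  have hs' : a * m + b * m ^ 2 = s := by
    rw [← hs, hab 1 isSymm_one]
    simp only [trace_add, trace_smul, trace_one, smul_eq_mul, hm]
    ring
  have hw' : a * (m ^ 2 + m) + 2 * b * m = w := by
    have hentry : ∀ i j, Φ (single i j 1 + single j i 1) i j =
        a + (if i = j then a + 2 * b else 0) := fun i j => by
      rw [hab _ (by simp [IsSymm, add_comm])]
      rcases eq_or_ne i j with rfl | hij
      · simp only [smul_add, smul_single, smul_eq_mul, mul_one, trace_add, trace_single_eq_same,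
          Matrix.add_apply, single_apply_same, Matrix.smul_apply, one_apply_eq, ↓reduceIte]
        ring
      · simp [hij]
    rw [← hw]
    simp only [hentry, Finset.sum_add_distrib, Finset.sum_const, Finset.sum_ite_eq,
      Finset.mem_univ, if_true, Finset.card_univ, nsmul_eq_mul, hm]
    ring
  have hm_gt : 1 < m := hm ▸ Nat.one_lt_cast.2 Fintype.one_lt_card
  have hm₀ : m ≠ 0 := by positivity
  have hm₁ : m - 1 ≠ 0 := by linarith
  have hm₂ : m + 2 ≠ 0 := by positivity
  have ha : a = (m * w - 2 * s) / (m * (m + 2) * (m - 1)) := by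
    rw [← hs', ← hw']
    field_simp
    ring
  have hb : b = ((m + 1) * s - w) / (m * (m + 2) * (m - 1)) := by
    rw [← hs', ← hw']
    field_simp
    ring
  rw [hab A hA, ha, hb]

end IsOrthogonallyEquivariant

end Equivariant

section MatrixMean

variable {Ω m n l : Type*} [MeasurableSpace Ω] {μ : Measure Ω}

/-- The entrywise expectation of a random matrix. -/
noncomputable def matrixMean (μ : Measure Ω) (X : Ω → Matrix m n ℝ) : Matrix m n ℝ :=
  of fun i j => ∫ ω, X ω i j ∂μ

lemma matrixMean_add {X Y : Ω → Matrix m n ℝ} (hX : ∀ i j, Integrable (fun ω => X ω i j) μ)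
    (hY : ∀ i j, Integrable (fun ω => Y ω i j) μ) :
    matrixMean μ (fun ω => X ω + Y ω) = matrixMean μ X + matrixMean μ Y := by
  ext i j
  exact integral_add (hX i j) (hY i j)

lemma matrixMean_smul (c : ℝ) (X : Ω → Matrix m n ℝ) :
    matrixMean μ (fun ω => c • X ω) = c • matrixMean μ X := by
  ext i j
  exact integral_const_mul c _

lemma matrixMean_const_mul [Fintype m] (B : Matrix l m ℝ) {X : Ω → Matrix m n ℝ}
    (hX : ∀ i j, Integrable (fun ω => X ω i j) μ) :
    matrixMean μ (fun ω => B * X ω) = B * matrixMean μ X := by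
  ext i j
  simp only [matrixMean, of_apply, mul_apply]
  rw [integral_finsetSum _ fun a _ => (hX a j).const_mul _]
  simp only [integral_const_mul]

lemma matrixMean_mul_const [Fintype n] (B : Matrix n l ℝ) {X : Ω → Matrix m n ℝ}
    (hX : ∀ i j, Integrable (fun ω => X ω i j) μ) :
    matrixMean μ (fun ω => X ω * B) = matrixMean μ X * B := by
  ext i j
  simp only [matrixMean, of_apply, mul_apply]
  rw [integral_finsetSum _ fun a _ => (hX i a).mul_const _]
  simp only [integral_mul_const]

lemma trace_matrixMean [Fintype n] {X : Ω → Matrix n n ℝ}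
    (hX : ∀ i, Integrable (fun ω => X ω i i) μ) :
    (matrixMean μ X).trace = ∫ ω, (X ω).trace ∂μ :=
  (integral_finsetSum _ fun i _ => hX i).symm

/-- The σ-algebra on matrices generated by the entries. -/
local instance matrixMeasurableSpace : MeasurableSpace (Matrix m n ℝ) :=
  inferInstanceAs (MeasurableSpace (m → n → ℝ))

local instance matrixBorelSpace [Finite m] [Finite n] : BorelSpace (Matrix m n ℝ) :=
  inferInstanceAs (BorelSpace (m → n → ℝ))

lemma measurable_apply_apply (i : m) (j : n) : Measurable fun X : Matrix m n ℝ => X i j :=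
  (measurable_pi_apply j).comp (measurable_pi_apply i)

lemma matrixMean_eq_of_identDistrib {Ω' : Type*} [MeasurableSpace Ω'] {ν : Measure Ω'}
    {X : Ω → Matrix m n ℝ} {Y : Ω' → Matrix m n ℝ} (h : IdentDistrib X Y μ ν) :
    matrixMean μ X = matrixMean ν Y := by
  ext i j
  exact (h.comp (measurable_apply_apply i j)).integral_eq

section SecondMoment

variable [Fintype n] {X : Ω → Matrix n n ℝ} (hX : ∀ i j, MemLp (fun ω => X ω i j) 2 μ)

include hX

lemma integrable_mul_mul_apply (A : Matrix n n ℝ) (i j : n) :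
    Integrable (fun ω => (X ω * A * X ω) i j) μ := by
  simp only [mul_apply, Finset.sum_mul]
  refine integrable_finsetSum _ fun b _ => integrable_finsetSum _ fun a _ => ?_
  exact (((hX i a).integrable_mul (hX b j)).mul_const (A a b)).congr
    (ae_of_all _ fun _ => mul_right_comm _ _ _)

/-- The linear map `A ↦ E[X A X]` of a random matrix `X` with square-integrable entries. -/
noncomputable def secondMomentMap : Matrix n n ℝ →ₗ[ℝ] Matrix n n ℝ where
  toFun A := matrixMean μ fun ω => X ω * A * X ω
  map_add' A B := by
    simp only [mul_add, add_mul]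
    exact matrixMean_add (integrable_mul_mul_apply hX A) (integrable_mul_mul_apply hX B)
  map_smul' c A := by
    simp only [mul_smul_comm, smul_mul_assoc]
    exact matrixMean_smul c _

lemma secondMomentMap_apply (A : Matrix n n ℝ) :
    secondMomentMap hX A = matrixMean μ fun ω => X ω * A * X ω :=
  rfl

lemma isOrthogonallyEquivariant_secondMomentMap [DecidableEq n]
    (hinv : ∀ U ∈ orthogonalGroup n ℝ, IdentDistrib (fun ω => U * X ω * Uᵀ) X μ μ) :
    IsOrthogonallyEquivariant (secondMomentMap hX) := by
  intro U hU A
  have hUU : Uᵀ * U = 1 := (mem_orthogonalGroup_iff' n ℝ).1 hU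
  have hmeas : Measurable fun Y : Matrix n n ℝ => Y * (U * A * Uᵀ) * Y :=
    Continuous.measurable (by fun_prop)
  have hcancel (Y : Matrix n n ℝ) :
      U * Y * Uᵀ * (U * A * Uᵀ) * (U * Y * Uᵀ) = U * (Y * A * Y) * Uᵀ := by
    calc _ = U * Y * (Uᵀ * U) * A * (Uᵀ * U) * Y * Uᵀ := by noncomm_ring
      _ = _ := by rw [hUU]; noncomm_ring
  calc matrixMean μ (fun ω => X ω * (U * A * Uᵀ) * X ω)
      = matrixMean μ (fun ω => U * (X ω * A * X ω) * Uᵀ) := by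
        simp only [← hcancel]
        exact (matrixMean_eq_of_identDistrib ((hinv U hU).comp hmeas)).symm
    _ = U * matrixMean μ (fun ω => X ω * A * X ω) * Uᵀ := by
        have hint := integrable_mul_mul_apply hX A
        rw [matrixMean_mul_const, matrixMean_const_mul U hint]
        intro i j
        simp only [mul_apply (M := U)]
        exact integrable_finsetSum _ fun a _ => (hint a j).const_mul _

lemma trace_secondMomentMap_one [DecidableEq n] :
    (secondMomentMap hX 1).trace = ∫ ω, (X ω * X ω).trace ∂μ := by
  rw [secondMomentMap_apply, trace_matrixMean fun i => integrable_mul_mul_apply hX 1 i i]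
  simp only [mul_one]

lemma sum_secondMomentMap_single_add_single [DecidableEq n] :
    ∑ i, ∑ j, secondMomentMap hX (single i j 1 + single j i 1) i j =
      ∫ ω, (X ω).trace ^ 2 + (X ω * (X ω)ᵀ).trace ∂μ := by
  have hsum (Y : Matrix n n ℝ) : Y.trace ^ 2 + (Y * Yᵀ).trace =
      ∑ i, ∑ j, (Y * (single i j 1 + single j i 1 : Matrix n n ℝ) * Y) i j := by
    simp only [mul_add, add_mul, Matrix.add_apply, mul_single_mul_apply, mul_one]
    simp only [sq, trace, diag_apply, mul_apply, transpose_apply, Finset.sum_mul_sum,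
      Finset.sum_add_distrib]
  simp only [hsum]
  have hint (i j : n) := integrable_mul_mul_apply hX (single i j 1 + single j i 1) i j
  rw [integral_finsetSum _ fun i _ => integrable_finsetSum _ fun j _ => hint i j]
  exact Finset.sum_congr rfl fun i _ => (integral_finsetSum _ fun j _ => hint i j).symm

theorem matrixMean_mul_mul_of_conj_invariant [DecidableEq n] [Nontrivial n]
    (hinv : ∀ U ∈ orthogonalGroup n ℝ, IdentDistrib (fun ω => U * X ω * Uᵀ) X μ μ)
    {m s w : ℝ} (hm : Fintype.card n = m) (hs : ∫ ω, (X ω * X ω).trace ∂μ = s)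
    (hw : ∫ ω, (X ω).trace ^ 2 + (X ω * (X ω)ᵀ).trace ∂μ = w)
    {A : Matrix n n ℝ} (hA : A.IsSymm) :
    matrixMean μ (fun ω => X ω * A * X ω) =
      ((m * w - 2 * s) / (m * (m + 2) * (m - 1))) • A +
        (((m + 1) * s - w) / (m * (m + 2) * (m - 1)) * A.trace) • 1 :=
  (isOrthogonallyEquivariant_secondMomentMap hX hinv).map_isSymm hm
    ((trace_secondMomentMap_one hX).trans hs)
    ((sum_secondMomentMap_single_add_single hX).trans hw) hA

end SecondMoment

section Frame

variable {ι : Type*} [Fintype n] [Fintype ι]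

lemma mul_transpose_mul_self_of_transpose_mul_self {R : Type*} [Semiring R] [DecidableEq ι]
    {F : Matrix n ι R} (hF : Fᵀ * F = 1) : F * Fᵀ * (F * Fᵀ) = F * Fᵀ := by
  rw [Matrix.mul_assoc, ← Matrix.mul_assoc Fᵀ, hF, Matrix.one_mul]

lemma trace_mul_transpose_of_transpose_mul_self {R : Type*} [CommSemiring R] [DecidableEq ι]
    {F : Matrix n ι R} (hF : Fᵀ * F = 1) : (F * Fᵀ).trace = Fintype.card ι := by
  rw [trace_mul_comm, hF, trace_one]

lemma abs_apply_le_one_of_mul_transpose_self {R : Type*} [CommRing R] [LinearOrder R]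
    [IsStrictOrderedRing R] {P : Matrix n n R} (hP : P * Pᵀ = P) (i j : n) : |P i j| ≤ 1 := by
  have hrow (i j : n) : P i j ^ 2 ≤ P i i :=
    calc P i j ^ 2 ≤ ∑ a, P i a ^ 2 :=
          Finset.single_le_sum (fun a _ => sq_nonneg (P i a)) (Finset.mem_univ j)
      _ = (P * Pᵀ) i i := by simp only [mul_apply, transpose_apply, sq]
      _ = P i i := by rw [hP]
  rw [← sq_le_one_iff_abs_le_one]
  nlinarith [hrow i i, hrow i j]

lemma measurable_mul_transpose {n : Type*} [Finite n] :
    Measurable fun F : Matrix n ι ℝ => F * Fᵀ :=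
  Continuous.measurable (by fun_prop)

variable {F : Ω → Matrix n ι ℝ}

lemma identDistrib_conj_mul_transpose {U : Matrix n n ℝ}
    (hU : IdentDistrib (fun ω => U * F ω) F μ μ) :
    IdentDistrib (fun ω => U * (F ω * (F ω)ᵀ) * Uᵀ) (fun ω => F ω * (F ω)ᵀ) μ μ := by
  simpa only [Function.comp_def, transpose_mul, Matrix.mul_assoc] using
    hU.comp measurable_mul_transpose

variable [DecidableEq ι] (hF : ∀ᵐ ω ∂μ, (F ω)ᵀ * F ω = 1)

include hF

lemma memLp_mul_transpose_apply [IsFiniteMeasure μ] (hmeas : AEMeasurable F μ) (p : ℝ≥0∞)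
    (i j : n) : MemLp (fun ω => (F ω * (F ω)ᵀ) i j) p μ := by
  have hentry : AEMeasurable (fun ω => (F ω * (F ω)ᵀ) i j) μ :=
    (measurable_apply_apply i j).comp_aemeasurable
      (measurable_mul_transpose.comp_aemeasurable hmeas)
  refine MemLp.of_bound hentry.aestronglyMeasurable 1 ?_
  filter_upwards [hF] with ω hω
  refine abs_apply_le_one_of_mul_transpose_self ?_ i j
  rw [transpose_mul, transpose_transpose, mul_transpose_mul_self_of_transpose_mul_self hω]

lemma integral_trace_mul_self_of_frame [IsProbabilityMeasure μ] :
    ∫ ω, (F ω * (F ω)ᵀ * (F ω * (F ω)ᵀ)).trace ∂μ = Fintype.card ι := by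
  refine integral_eq_const ?_
  filter_upwards [hF] with ω hω
  rw [mul_transpose_mul_self_of_transpose_mul_self hω,
    trace_mul_transpose_of_transpose_mul_self hω]

lemma integral_trace_sq_add_trace_of_frame [IsProbabilityMeasure μ] :
    ∫ ω, (F ω * (F ω)ᵀ).trace ^ 2 + (F ω * (F ω)ᵀ * (F ω * (F ω)ᵀ)ᵀ).trace ∂μ =
      (Fintype.card ι : ℝ) ^ 2 + Fintype.card ι := by
  refine integral_eq_const ?_
  filter_upwards [hF] with ω hω
  rw [transpose_mul, transpose_transpose, mul_transpose_mul_self_of_transpose_mul_self hω,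
    trace_mul_transpose_of_transpose_mul_self hω]

theorem haar_k_expectation_general [DecidableEq n] [Nontrivial n] [IsProbabilityMeasure μ]
    (hinv : ∀ U ∈ orthogonalGroup n ℝ, IdentDistrib (fun ω => U * F ω) F μ μ)
    {A : Matrix n n ℝ} (hA : A.IsSymm) :
    let m : ℝ := Fintype.card n
    let k : ℝ := Fintype.card ι
    let β : ℝ := m * (m - k) / ((m + 2) * (m - 1))
    matrixMean μ (fun ω => F ω * (F ω)ᵀ * A * (F ω * (F ω)ᵀ)) =
      (k / m * (1 - β)) • A + (A.trace * (k / m ^ 2) * β) • 1 := by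
  intro m k β
  have hLp := memLp_mul_transpose_apply hF (hinv 1 (one_mem _)).aemeasurable_snd 2
  rw [matrixMean_mul_mul_of_conj_invariant hLp
    (fun U hU => identDistrib_conj_mul_transpose (hinv U hU)) (m := m) rfl
    (integral_trace_mul_self_of_frame hF) (integral_trace_sq_add_trace_of_frame hF) hA]
  have hm : 1 < m := Nat.one_lt_cast.2 Fintype.one_lt_card
  have hm₀ : m ≠ 0 := by positivity
  have hm₁ : m - 1 ≠ 0 := by linarith
  have hm₂ : m + 2 ≠ 0 := by positivity
  congr 2 <;>
  · simp only [β, k]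
    field_simp
    ring

end Frame

lemma ae_firstCols_transpose_mul_self {m k : ℕ} (hkm : k ≤ m)
    {μ : Measure (Fin m → Fin m → ℝ)} [IsProbabilityMeasure μ]
    (hsupp : μ {Q | (of Q)ᵀ * of Q = 1} = 1) :
    ∀ᵐ Q ∂μ, (firstCols k hkm Q)ᵀ * firstCols k hkm Q = 1 := by
  have hclosed : IsClosed {Q : Fin m → Fin m → ℝ | (of Q)ᵀ * of Q = 1} :=
    isClosed_eq (by fun_prop) continuous_const
  filter_upwards [(mem_ae_iff_prob_eq_one hclosed.measurableSet).2 hsupp] with Q hQ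
  have hsub : (firstCols k hkm Q)ᵀ * firstCols k hkm Q =
      ((of Q)ᵀ * of Q).submatrix (Fin.castLE hkm) (Fin.castLE hkm) :=
    rfl
  rw [hsub, hQ, submatrix_one _ (Fin.castLE_injective hkm)]

lemma identDistrib_mul_firstCols {m k : ℕ} (hkm : k ≤ m) {μ : Measure (Fin m → Fin m → ℝ)}
    {U : Matrix (Fin m) (Fin m) ℝ}
    (hU : Measure.map (fun Q => of.symm (U * of Q)) μ = μ) :
    IdentDistrib (fun Q => U * firstCols k hkm Q) (firstCols k hkm) μ μ := by
  have hcols : Measurable (firstCols (m := m) k hkm) :=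
    Continuous.measurable (by unfold firstCols; fun_prop)
  have hleft : Measurable fun Q : Matrix (Fin m) (Fin m) ℝ => U * Q :=
    Continuous.measurable (by fun_prop)
  have hlaw : IdentDistrib (fun Q => of.symm (U * of Q)) id μ μ :=
    ⟨hleft.aemeasurable, aemeasurable_id, hU.trans Measure.map_id.symm⟩
  exact hlaw.comp hcols

end MatrixMean

/-- For `Q` the first `k` columns of a Haar-distributed orthogonal matrix and `A`
symmetric, `E[Q Qᵀ A Q Qᵀ] = (k/m)(1−β)·A + (tr A)·(k/m²)·β·I` where
`β = m(m−k)/((m+2)(m−1))`.  The Haar measure on `O(m)` is characterized as a probability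
measure supported on the orthogonal matrices and invariant under left translation by any
orthogonal matrix. -/
theorem haar_k_expectation (m k : ℕ) (hm : 2 ≤ m) (hk : 1 ≤ k) (hkm : k ≤ m)
    (A : Matrix (Fin m) (Fin m) ℝ) (hA : A.IsSymm)
    (μ : Measure (Fin m → Fin m → ℝ)) [IsProbabilityMeasure μ]
    (hsupp : μ {Q | (Matrix.of Q)ᵀ * (Matrix.of Q) = 1} = 1)
    (hinv : ∀ U : Matrix (Fin m) (Fin m) ℝ, Uᵀ * U = 1 →
      Measure.map (fun Q => Matrix.of.symm (U * Matrix.of Q)) μ = μ) :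
    (Matrix.of fun i j => ∫ Q,
        ((firstCols k hkm Q) * (firstCols k hkm Q)ᵀ * A *
          ((firstCols k hkm Q) * (firstCols k hkm Q)ᵀ)) i j ∂μ) =
      (((k : ℝ) / m) * (1 - ((m : ℝ) * ((m : ℝ) - (k : ℝ))) / (((m : ℝ) + 2) * ((m : ℝ) - 1)))) • A +
        ((Matrix.trace A) * ((k : ℝ) / (m : ℝ) ^ 2) *
          (((m : ℝ) * ((m : ℝ) - (k : ℝ))) / (((m : ℝ) + 2) * ((m : ℝ) - 1)))) •
          (1 : Matrix (Fin m) (Fin m) ℝ) := by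
  have : Nontrivial (Fin m) := Fin.nontrivial_iff_two_le.2 hm
  simpa [matrixMean] using haar_k_expectation_general (ae_firstCols_transpose_mul_self hkm hsupp)
    (fun U hU => identDistrib_mul_firstCols hkm (hinv U ((mem_orthogonalGroup_iff' _ ℝ).1 hU))) hA
end

section
/- Let m ≥ 2, 1 ≤ k ≤ m, and let A be a real symmetric m×m matrix. Let the random m×k matrix Q be √(m/k) times the matrix of the first k columns of an m×m random orthogonal matrix distributed according to the Haar probability measure on O(m). Then ‖E[Q Qᵀ A Q Qᵀ]‖ = (m/k)·‖ (1−β)·A + β·(tr A/m)·I ‖, where β = m(m−k)/((m+2)(m−1)), I is the m×m identity matrix, and ‖·‖ denotes the operator norm. -/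
open Matrix MeasureTheory

/-- The operator norm on `m × m` real matrices induced by the Euclidean norm. -/
noncomputable def opNorm {m : ℕ} (A : Matrix (Fin m) (Fin m) ℝ) : ℝ :=
  ‖Matrix.toEuclideanCLM (𝕜 := ℝ) (n := Fin m) A‖

/-- `√(m/k)` times the first `k` columns of an `m × m` matrix (given as a function):
the haar-k compression matrix. -/
noncomputable def haarK {m : ℕ} (k : ℕ) (hkm : k ≤ m) (Q : Fin m → Fin m → ℝ) :
    Matrix (Fin m) (Fin k) ℝ :=
  Real.sqrt ((m : ℝ) / k) • (Matrix.of Q).submatrix id (Fin.castLE hkm)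

/-!
For a square-integrable random matrix `X` whose law is invariant under orthogonal conjugation, the
operator `A ↦ 𝔼[X A X]` commutes with orthogonal conjugation. Equivariance under diagonal sign
matrices makes it preserve diagonal matrices, equivariance under permutation matrices then gives
the form `A ↦ a A + b (tr A) 1` on them, and the spectral theorem extends this form to all
symmetric `A`. The scalars `a` and `b` are determined by `𝔼[tr X²]` and `𝔼[(tr X)² + tr (X Xᵀ)]`,
which are integrals of constants when `X = Q Qᵀ` with `Qᵀ Q = (m/k) 1`.
-/

section UnitaryEquivariant

variable {n R : Type*} [Fintype n] [DecidableEq n] [CommRing R] [StarRing R]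

lemma permMatrix_mem_unitaryGroup (σ : Equiv.Perm n) : σ.permMatrix R ∈ unitaryGroup n R := by
  rw [mem_unitaryGroup_iff, star_eq_conjTranspose, conjTranspose_permMatrix, ← permMatrix_mul,
    inv_mul_cancel, permMatrix_one]

lemma diagonal_mem_unitaryGroup {d : n → R} (hd : ∀ i, d i * star (d i) = 1) :
    diagonal d ∈ unitaryGroup n R := by
  rw [mem_unitaryGroup_iff, star_eq_conjTranspose, diagonal_conjTranspose, diagonal_mul_diagonal,
    ← diagonal_one]
  exact congrArg diagonal (funext hd)

lemma permMatrix_mul_mul_star (σ : Equiv.Perm n) (A : Matrix n n R) :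
    σ.permMatrix R * A * star (σ.permMatrix R) = A.submatrix σ σ := by
  rw [star_eq_conjTranspose, conjTranspose_permMatrix, Equiv.Perm.permMatrix,
    Equiv.Perm.permMatrix, PEquiv.toMatrix_toPEquiv_mul, PEquiv.mul_toMatrix_toPEquiv]
  rfl

/-- A linear operator on square matrices that commutes with conjugation by unitary matrices
(by orthogonal matrices, when the star operation on `R` is trivial). -/
def IsUnitaryEquivariant (L : Matrix n n R →ₗ[R] Matrix n n R) : Prop :=
  ∀ U ∈ unitaryGroup n R, ∀ A, L (U * A * star U) = U * L A * star U

namespace IsUnitaryEquivariant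

variable {L : Matrix n n R →ₗ[R] Matrix n n R}

lemma apply_submatrix (hL : IsUnitaryEquivariant L) (σ : Equiv.Perm n) (A : Matrix n n R) :
    L (A.submatrix σ σ) = (L A).submatrix σ σ := by
  simpa only [permMatrix_mul_mul_star] using hL _ (permMatrix_mem_unitaryGroup σ) A

-- Conjugation by a diagonal sign matrix fixes `diagonal d` and negates row `i` off the diagonal.
lemma apply_diagonal_of_ne [IsAddTorsionFree R] (hL : IsUnitaryEquivariant L) (d : n → R) {i j : n}
    (hij : i ≠ j) : L (diagonal d) i j = 0 := by
  let s : n → R := Function.update 1 i (-1)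
  have hs_star : star s = s := by
    ext a; rcases eq_or_ne a i with rfl | ha <;> simp [s, *]
  have hs_mul : ∀ a, s a * s a = 1 := fun a => by
    rcases eq_or_ne a i with rfl | ha <;> simp [s, *]
  have hfix : diagonal s * diagonal d * star (diagonal s) = diagonal d := by
    rw [star_eq_conjTranspose, diagonal_conjTranspose, hs_star, diagonal_mul_diagonal,
      diagonal_mul_diagonal]
    exact congrArg diagonal (funext fun a => by rw [mul_right_comm, hs_mul, one_mul])
  have hs_mem : diagonal s ∈ unitaryGroup n R :=
    diagonal_mem_unitaryGroup fun a => by rw [← Pi.star_apply, hs_star, hs_mul]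
  have hneg := congrFun₂ (hL _ hs_mem (diagonal d)) i j
  rw [hfix, star_eq_conjTranspose, diagonal_conjTranspose, hs_star, mul_diagonal,
    diagonal_mul] at hneg
  simpa [s, hij.symm, self_eq_neg] using hneg

lemma exists_apply_single [Nontrivial n] (hL : IsUnitaryEquivariant L) :
    ∃ a b : R, ∀ i j, L (single i i 1) j j = if i = j then a else b := by
  obtain ⟨x, y, hxy⟩ := exists_pair_ne n
  have hperm (σ : Equiv.Perm n) (i j : n) :
      L (single (σ i) (σ i) 1) (σ j) (σ j) = L (single i i 1) j j := by
    simpa using congrFun₂ (hL.apply_submatrix σ (single (σ i) (σ i) 1)).symm j j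
  refine ⟨L (single x x 1) x x, L (single x x 1) y y, fun i j => ?_⟩
  split_ifs with hij
  · subst hij
    simpa using (hperm (Equiv.swap x i) x x)
  · obtain ⟨σ, rfl, rfl⟩ := MulAction.is_two_pretransitive_iff.mp
      (Equiv.Perm.isMultiplyPretransitive n 2) hxy hij
    exact hperm σ x y

theorem exists_apply_diagonal [IsAddTorsionFree R] [Nontrivial n] (hL : IsUnitaryEquivariant L) :
    ∃ a b : R, ∀ d : n → R, L (diagonal d) = a • diagonal d + (b * ∑ i, d i) • 1 := by
  obtain ⟨a, b, hab⟩ := hL.exists_apply_single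
  refine ⟨a - b, b, fun d => ?_⟩
  ext k l
  rcases eq_or_ne k l with rfl | hkl
  · have hd : diagonal d = ∑ i, d i • single i i (1 : R) := by
      ext i j
      simp [Matrix.sum_apply, single_apply, diagonal_apply, ite_and]
    have hsummand (i : n) : d i * (if i = k then a else b) =
        (if i = k then (a - b) * d i else 0) + b * d i := by
      split_ifs <;> ring
    have hLd : L (diagonal d) k k = ∑ i, d i * (if i = k then a else b) := by
      simp only [hd, map_sum, map_smul, Matrix.sum_apply, Matrix.smul_apply, hab, smul_eq_mul]
    simp only [hLd, hsummand, Finset.sum_add_distrib, Finset.sum_ite_eq', Finset.mem_univ, if_true,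
      ← Finset.mul_sum, Matrix.add_apply, Matrix.smul_apply, diagonal_apply_eq, one_apply_eq,
      smul_eq_mul, mul_one]
  · simp [hL.apply_diagonal_of_ne d hkl, hkl]

end IsUnitaryEquivariant

end UnitaryEquivariant

section RCLike

variable {n 𝕜 : Type*} [Fintype n] [DecidableEq n] [RCLike 𝕜]

namespace IsUnitaryEquivariant

variable {L : Matrix n n 𝕜 →ₗ[𝕜] Matrix n n 𝕜}

theorem exists_apply_of_isHermitian [Nontrivial n] (hL : IsUnitaryEquivariant L) :
    ∃ a b : 𝕜, ∀ A : Matrix n n 𝕜, A.IsHermitian → L A = a • A + (b * A.trace) • 1 := by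
  obtain ⟨a, b, hab⟩ := hL.exists_apply_diagonal
  refine ⟨a, b, fun A hA => ?_⟩
  have hU := hA.eigenvectorUnitary.2
  set U : Matrix n n 𝕜 := hA.eigenvectorUnitary.1
  obtain ⟨d, hAd⟩ : ∃ d : n → 𝕜, A = U * diagonal d * star U := ⟨_, hA.spectral_theorem⟩
  have htr : A.trace = ∑ i, d i := by
    rw [hAd, trace_mul_comm, ← Matrix.mul_assoc, mem_unitaryGroup_iff'.mp hU, Matrix.one_mul,
      trace_diagonal]
  calc L A = U * (a • diagonal d + (b * ∑ i, d i) • 1) * star U := by rw [hAd, hL U hU, hab]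
    _ = a • A + (b * A.trace) • 1 := by
      rw [Matrix.mul_add, Matrix.add_mul, Matrix.mul_smul, Matrix.smul_mul, ← hAd,
        Matrix.mul_smul, Matrix.smul_mul, Matrix.mul_one, mem_unitaryGroup_iff.mp hU, htr]

theorem apply_of_isHermitian [Nontrivial n] (hL : IsUnitaryEquivariant L) {m s t : 𝕜}
    (hm : m = Fintype.card n)
    (hs : ∑ i, ∑ j, L (single i j 1 + single j i 1) i j = s) (ht : (L 1).trace = t)
    {A : Matrix n n 𝕜} (hA : A.IsHermitian) :
    L A = ((m * s - 2 * t) / (m * (m + 2) * (m - 1))) • A +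
      (((m + 1) * t - s) / (m * (m + 2) * (m - 1)) * A.trace) • 1 := by
  obtain ⟨a, b, hab⟩ := hL.exists_apply_of_isHermitian
  have ht' : m * a + m ^ 2 * b = t := by
    rw [← ht, hab 1 isHermitian_one]
    simp only [trace_one, ← hm, trace_add, trace_smul, smul_eq_mul]
    ring
  have hs' : m * (m + 1) * a + 2 * m * b = s := by
    have hsymm (i j : n) : (single i j (1 : 𝕜) + single j i 1).IsHermitian := by
      simp [IsHermitian, conjTranspose_single, add_comm]
    have hentry (i j : n) : L (single i j 1 + single j i 1) i j =
        a + (if i = j then a + 2 * b else 0) := by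
      rw [hab _ (hsymm i j)]
      rcases eq_or_ne i j with rfl | hij
      · simp only [smul_add, smul_single, smul_eq_mul, mul_one, trace_add, trace_single_eq_same,
          Matrix.add_apply, single_apply_same, Matrix.smul_apply, one_apply_eq, if_true]
        ring
      · simp [hij]
    rw [← hs]
    simp only [hentry, Finset.sum_add_distrib, Finset.sum_const, Finset.card_univ, nsmul_eq_mul,
      ← hm, Finset.sum_ite_eq, Finset.mem_univ, if_true]
    ring
  have hm0 : m ≠ 0 := by simp [hm]
  have hm1 : m - 1 ≠ 0 := by
    have := Fintype.one_lt_card (α := n)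
    simp [hm, sub_eq_zero, this.ne']
  have hm2 : m + 2 ≠ 0 := by
    rw [hm]; norm_cast
  have ha : a = (m * s - 2 * t) / (m * (m + 2) * (m - 1)) := by
    field_simp; rw [← ht', ← hs']; ring
  have hb : b = ((m + 1) * t - s) / (m * (m + 2) * (m - 1)) := by
    field_simp; rw [← ht', ← hs']; ring
  rw [hab A hA, ha, hb]

end IsUnitaryEquivariant

end RCLike

section TransposeMulSelf

variable {n p R : Type*} [Fintype n] [Fintype p] [DecidableEq p] [CommRing R] {c : R}
  {V : Matrix n p R}

lemma trace_mul_transpose (hV : Vᵀ * V = c • 1) :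
    (V * Vᵀ).trace = c * Fintype.card p := by
  simp [trace_mul_comm, hV]

lemma trace_mul_transpose_mul_self (hV : Vᵀ * V = c • 1) :
    (V * Vᵀ * (V * Vᵀ)).trace = c ^ 2 * Fintype.card p := by
  have hsq : V * Vᵀ * (V * Vᵀ) = c • (V * Vᵀ) := by
    rw [Matrix.mul_assoc, ← Matrix.mul_assoc Vᵀ, hV, Matrix.smul_mul, Matrix.one_mul,
      Matrix.mul_smul]
  rw [hsq, trace_smul, trace_mul_transpose hV, smul_eq_mul, sq, mul_assoc]

end TransposeMulSelf

section RandomMatrix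

open ProbabilityTheory
open scoped Matrix.Norms.L2Operator

variable {Ω l n : Type*} [MeasurableSpace Ω] {μ : Measure Ω} [Fintype l] [Fintype n] [DecidableEq n]

lemma integral_matrix_apply {Y : Ω → Matrix l n ℝ} (hY : Integrable Y μ) (i : l) (j : n) :
    (∫ ω, Y ω ∂μ) i j = ∫ ω, Y ω i j ∂μ :=
  ((entryLinearMap ℝ ℝ i j).toContinuousLinearMap.integral_comp_comm hY).symm

lemma trace_integral {Y : Ω → Matrix n n ℝ} (hY : Integrable Y μ) :
    (∫ ω, Y ω ∂μ).trace = ∫ ω, (Y ω).trace ∂μ :=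
  ((traceLinearMap n ℝ ℝ).toContinuousLinearMap.integral_comp_comm hY).symm

section Sandwich

variable {X : Ω → Matrix n n ℝ}

lemma integrable_mul_mul (hX : MemLp X 2 μ) (A : Matrix n n ℝ) :
    Integrable (fun ω => X ω * A * X ω) μ :=
  (hX.mul_const A).integrable_mul hX

/-- The operator `A ↦ 𝔼[X A X]` attached to a square-integrable random matrix `X`. -/
noncomputable def sandwichOperator (hX : MemLp X 2 μ) : Matrix n n ℝ →ₗ[ℝ] Matrix n n ℝ where
  toFun A := ∫ ω, X ω * A * X ω ∂μ
  map_add' A B := by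
    simp only [Matrix.mul_add, Matrix.add_mul]
    exact integral_add (integrable_mul_mul hX A) (integrable_mul_mul hX B)
  map_smul' c A := by
    simp only [Matrix.mul_smul, Matrix.smul_mul, integral_smul, RingHom.id_apply]

lemma sandwichOperator_apply_apply (hX : MemLp X 2 μ) (A : Matrix n n ℝ) (i j : n) :
    sandwichOperator hX A i j = ∫ ω, (X ω * A * X ω) i j ∂μ :=
  integral_matrix_apply (integrable_mul_mul hX A) i j

lemma trace_sandwichOperator_one (hX : MemLp X 2 μ) :
    (sandwichOperator hX 1).trace = ∫ ω, (X ω * X ω).trace ∂μ :=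
  (trace_integral (integrable_mul_mul hX 1)).trans (by simp only [Matrix.mul_one])

lemma sum_sandwichOperator_single_add_single (hX : MemLp X 2 μ) :
    ∑ i, ∑ j, sandwichOperator hX (single i j 1 + single j i 1) i j =
      ∫ ω, ((X ω).trace ^ 2 + (X ω * (X ω)ᵀ).trace) ∂μ := by
  have hint (i j : n) :
      Integrable (fun ω => (X ω * (single i j 1 + single j i 1 : Matrix n n ℝ) * X ω) i j) μ :=
    (entryLinearMap ℝ ℝ i j).toContinuousLinearMap.integrable_comp (integrable_mul_mul hX _)
  have hentry (Y : Matrix n n ℝ) (i j : n) :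
      (Y * (single i j 1 + single j i 1 : Matrix n n ℝ) * Y) i j =
        Y i i * Y j j + Y i j * Y i j := by
    simp [Matrix.mul_add, Matrix.mul_apply, single_apply, ite_and, add_mul, Finset.sum_add_distrib]
  simp only [sandwichOperator_apply_apply]
  simp only [← integral_finsetSum _ fun j _ => hint _ j]
  rw [← integral_finsetSum _ fun i _ => integrable_finsetSum _ fun j _ => hint i j]
  simp only [hentry, Finset.sum_add_distrib, ← Finset.mul_sum, ← Finset.sum_mul, sq, trace,
    diag_apply, mul_apply, transpose_apply]

/-- The law of the random square matrix `X` is invariant under conjugation by every orthogonal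
matrix. -/
def IsConjInvariant [MeasurableSpace (Matrix n n ℝ)] (X : Ω → Matrix n n ℝ) (μ : Measure Ω) :
    Prop :=
  ∀ U ∈ unitaryGroup n ℝ, IdentDistrib (fun ω => U * X ω * star U) X μ μ

variable [MeasurableSpace (Matrix n n ℝ)] [BorelSpace (Matrix n n ℝ)]

lemma IsConjInvariant.isUnitaryEquivariant (hinv : IsConjInvariant X μ) (hX : MemLp X 2 μ) :
    IsUnitaryEquivariant (sandwichOperator hX) := by
  intro U hU A
  have hmeas : Measurable fun Y : Matrix n n ℝ => Y * (U * A * star U) * Y :=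
    Continuous.measurable (by fun_prop)
  have hcancel (V : Matrix n n ℝ) : star U * (U * V) = V := by
    rw [← Matrix.mul_assoc, mem_unitaryGroup_iff'.mp hU, Matrix.one_mul]
  have hint := integrable_mul_mul hX A
  calc ∫ ω, X ω * (U * A * star U) * X ω ∂μ
      = ∫ ω, U * X ω * star U * (U * A * star U) * (U * X ω * star U) ∂μ :=
        ((hinv U hU).comp hmeas).integral_eq.symm
    _ = ∫ ω, U * (X ω * A * X ω) * star U ∂μ := by simp only [Matrix.mul_assoc, hcancel]
    _ = U * (∫ ω, X ω * A * X ω ∂μ) * star U := by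
        rw [integral_mul_const_of_integrable (hint.const_mul U),
          integral_const_mul_of_integrable hint]

theorem IsConjInvariant.integral_mul_mul [Nontrivial n] (hinv : IsConjInvariant X μ)
    (hX : MemLp X 2 μ) {m s t : ℝ} (hm : m = Fintype.card n)
    (hs : ∫ ω, ((X ω).trace ^ 2 + (X ω * (X ω)ᵀ).trace) ∂μ = s)
    (ht : ∫ ω, (X ω * X ω).trace ∂μ = t) {A : Matrix n n ℝ} (hA : A.IsSymm) :
    ∫ ω, X ω * A * X ω ∂μ = ((m * s - 2 * t) / (m * (m + 2) * (m - 1))) • A +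
      (((m + 1) * t - s) / (m * (m + 2) * (m - 1)) * A.trace) • 1 :=
  (hinv.isUnitaryEquivariant hX).apply_of_isHermitian hm
    ((sum_sandwichOperator_single_add_single hX).trans hs)
    ((trace_sandwichOperator_one hX).trans ht) (isHermitian_iff_isSymm.mpr hA)

end Sandwich

section ScaledIsometry

variable {p : Type*} {W : Ω → Matrix n p ℝ} {c : ℝ}

/-- The law of the random rectangular matrix `W` is invariant under left multiplication by every
orthogonal matrix. -/
def IsLeftInvariant [MeasurableSpace (Matrix n p ℝ)] (W : Ω → Matrix n p ℝ) (μ : Measure Ω) :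
    Prop :=
  ∀ U ∈ unitaryGroup n ℝ, IdentDistrib (fun ω => U * W ω) W μ μ

lemma IsLeftInvariant.aestronglyMeasurable [MeasurableSpace (Matrix n p ℝ)]
    [BorelSpace (Matrix n p ℝ)] [Finite p] (hinv : IsLeftInvariant W μ) :
    AEStronglyMeasurable W μ := by
  classical
  have := Fintype.ofFinite p
  exact (hinv 1 (one_mem _)).aemeasurable_snd.aestronglyMeasurable

variable [Fintype p]

lemma memLp_mul_transpose [DecidableEq p] [IsFiniteMeasure μ] (hmeas : AEStronglyMeasurable W μ)
    (hW : ∀ᵐ ω ∂μ, (W ω)ᵀ * W ω = c • 1) (q : ENNReal) : MemLp (fun ω => W ω * (W ω)ᵀ) q μ := by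
  have hcont : Continuous fun V : Matrix n p ℝ => V * Vᵀ := by fun_prop
  refine .of_bound (hcont.comp_aestronglyMeasurable hmeas) ‖(c • 1 : Matrix p p ℝ)‖ ?_
  filter_upwards [hW] with ω hω
  calc ‖W ω * (W ω)ᵀ‖ ≤ ‖W ω‖ * ‖(W ω)ᵀ‖ := l2_opNorm_mul _ _
    _ = ‖W ω‖ * ‖W ω‖ := by
      rw [← conjTranspose_eq_transpose_of_trivial, l2_opNorm_conjTranspose]
    _ = ‖(c • 1 : Matrix p p ℝ)‖ := by
      rw [← l2_opNorm_conjTranspose_mul_self, conjTranspose_eq_transpose_of_trivial, hω]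

variable [MeasurableSpace (Matrix n p ℝ)] [BorelSpace (Matrix n p ℝ)]

lemma IsLeftInvariant.isConjInvariant [MeasurableSpace (Matrix n n ℝ)]
    [BorelSpace (Matrix n n ℝ)] (hinv : IsLeftInvariant W μ) :
    IsConjInvariant (fun ω => W ω * (W ω)ᵀ) μ := by
  intro U hU
  have hmeas : Measurable fun V : Matrix n p ℝ => V * Vᵀ := Continuous.measurable (by fun_prop)
  simpa [Function.comp_def, star_eq_conjTranspose, Matrix.mul_assoc] using (hinv U hU).comp hmeas

theorem IsLeftInvariant.integral_mul_transpose_mul_mul_transpose [DecidableEq p]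
    [IsProbabilityMeasure μ] [Nontrivial n] (hinv : IsLeftInvariant W μ)
    (hW : ∀ᵐ ω ∂μ, (W ω)ᵀ * W ω = c • 1)
    {m k : ℝ} (hm : m = Fintype.card n) (hk : k = Fintype.card p)
    {A : Matrix n n ℝ} (hA : A.IsSymm) :
    ∫ ω, W ω * (W ω)ᵀ * A * (W ω * (W ω)ᵀ) ∂μ =
      (c ^ 2 * k * (m * k + m - 2) / (m * (m + 2) * (m - 1))) • A +
        (c ^ 2 * k * (m - k) / (m * (m + 2) * (m - 1)) * A.trace) • 1 := by
  borelize (Matrix n n ℝ)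
  have ht : ∫ ω, (W ω * (W ω)ᵀ * (W ω * (W ω)ᵀ)).trace ∂μ = c ^ 2 * k := by
    refine integral_eq_const ?_
    filter_upwards [hW] with ω hω
    rw [trace_mul_transpose_mul_self hω, hk]
  have hs : ∫ ω, ((W ω * (W ω)ᵀ).trace ^ 2 + (W ω * (W ω)ᵀ * (W ω * (W ω)ᵀ)ᵀ).trace) ∂μ =
      (c * k) ^ 2 + c ^ 2 * k := by
    refine integral_eq_const ?_
    filter_upwards [hW] with ω hω
    rw [transpose_mul, transpose_transpose, trace_mul_transpose_mul_self hω,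
      trace_mul_transpose hω, hk]
  rw [hinv.isConjInvariant.integral_mul_mul
    (memLp_mul_transpose hinv.aestronglyMeasurable hW 2) hm hs ht hA]
  congr 3 <;> ring

end ScaledIsometry

end RandomMatrix

section HaarK

variable {m k : ℕ} (hkm : k ≤ m)

lemma continuous_haarK : Continuous (haarK k hkm) :=
  (continuous_id.matrixOf.matrix_submatrix id (Fin.castLE hkm)).const_smul (Real.sqrt ((m : ℝ) / k))

lemma haarK_transpose_mul_self {Q : Fin m → Fin m → ℝ} (hQ : (Matrix.of Q)ᵀ * Matrix.of Q = 1) :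
    (haarK k hkm Q)ᵀ * haarK k hkm Q = ((m : ℝ) / k) • 1 := by
  have hsub : ((Matrix.of Q).submatrix id (Fin.castLE hkm))ᵀ *
      (Matrix.of Q).submatrix id (Fin.castLE hkm) = 1 := by
    rw [transpose_submatrix, ← submatrix_mul _ _ _ _ _ Function.bijective_id, hQ,
      submatrix_one _ (Fin.castLE_injective hkm)]
  rw [haarK, transpose_smul, Matrix.smul_mul, Matrix.mul_smul, smul_smul, hsub,
    Real.mul_self_sqrt (by positivity)]

lemma haarK_mul (U : Matrix (Fin m) (Fin m) ℝ) (Q : Fin m → Fin m → ℝ) :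
    haarK k hkm (Matrix.of.symm (U * Matrix.of Q)) = U * haarK k hkm Q := by
  rw [haarK, haarK, Matrix.mul_smul, Equiv.apply_symm_apply]
  rfl

variable {μ : Measure (Fin m → Fin m → ℝ)}

lemma ae_orthogonal [IsProbabilityMeasure μ]
    (hsupp : μ {Q | (Matrix.of Q)ᵀ * (Matrix.of Q) = 1} = 1) :
    ∀ᵐ Q ∂μ, (Matrix.of Q)ᵀ * (Matrix.of Q) = 1 := by
  have hclosed : IsClosed {Q : Fin m → Fin m → ℝ | (Matrix.of Q)ᵀ * (Matrix.of Q) = 1} :=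
    isClosed_eq (continuous_id.matrixOf.matrix_transpose.matrix_mul continuous_id.matrixOf)
      continuous_const
  exact (mem_ae_iff_prob_eq_one hclosed.measurableSet).mpr hsupp

lemma isLeftInvariant_haarK [MeasurableSpace (Matrix (Fin m) (Fin k) ℝ)]
    [BorelSpace (Matrix (Fin m) (Fin k) ℝ)]
    (hinv : ∀ U : Matrix (Fin m) (Fin m) ℝ, Uᵀ * U = 1 →
      Measure.map (fun Q => Matrix.of.symm (U * Matrix.of Q)) μ = μ) :
    IsLeftInvariant (haarK k hkm) μ := by
  intro U hU
  have hmul : Continuous fun Q : Fin m → Fin m → ℝ => Matrix.of.symm (U * Matrix.of Q) :=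
    continuous_const.matrix_mul continuous_id.matrixOf
  have hlaw : ProbabilityTheory.IdentDistrib
      (fun Q : Fin m → Fin m → ℝ => Matrix.of.symm (U * Matrix.of Q)) id μ μ :=
    ⟨hmul.measurable.aemeasurable, aemeasurable_id, by
      rw [hinv U (mem_unitaryGroup_iff'.mp hU), Measure.map_id]⟩
  simpa only [Function.comp_def, haarK_mul, id] using hlaw.comp (continuous_haarK hkm).measurable

open scoped Matrix.Norms.L2Operator in
theorem integral_haarK_mul_transpose_mul_mul_transpose [IsProbabilityMeasure μ] (hm : 2 ≤ m)
    (hk : 1 ≤ k) {A : Matrix (Fin m) (Fin m) ℝ} (hA : A.IsSymm)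
    (hsupp : μ {Q | (Matrix.of Q)ᵀ * (Matrix.of Q) = 1} = 1)
    (hinv : ∀ U : Matrix (Fin m) (Fin m) ℝ, Uᵀ * U = 1 →
      Measure.map (fun Q => Matrix.of.symm (U * Matrix.of Q)) μ = μ) :
    (Matrix.of fun i j => ∫ Q,
        (haarK k hkm Q * (haarK k hkm Q)ᵀ * A * (haarK k hkm Q * (haarK k hkm Q)ᵀ)) i j ∂μ) =
      ((m : ℝ) / k) • ((1 - ((m : ℝ) * (m - k)) / ((m + 2) * (m - 1))) • A +
        (((m : ℝ) * (m - k)) / ((m + 2) * (m - 1)) * (A.trace / m)) • 1) := by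
  borelize (Matrix (Fin m) (Fin k) ℝ)
  have : Nontrivial (Fin m) := Fin.nontrivial_iff_two_le.mpr hm
  have hinvW := isLeftInvariant_haarK hkm hinv
  have hW : ∀ᵐ Q ∂μ, (haarK k hkm Q)ᵀ * haarK k hkm Q = ((m : ℝ) / k) • 1 :=
    (ae_orthogonal hsupp).mono fun Q hQ => haarK_transpose_mul_self hkm hQ
  have hint := integrable_mul_mul (memLp_mul_transpose hinvW.aestronglyMeasurable hW 2) A
  have hm1 : (m : ℝ) - 1 ≠ 0 := by
    have : (2 : ℝ) ≤ m := by exact_mod_cast hm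
    linarith
  have hm0 : (m : ℝ) ≠ 0 := by positivity
  have hk0 : (k : ℝ) ≠ 0 := by positivity
  have hcoeffA : ((m : ℝ) / k) ^ 2 * k * (m * k + m - 2) / (m * (m + 2) * (m - 1)) =
      m / k * (1 - m * (m - k) / ((m + 2) * (m - 1))) := by
    field_simp
    ring
  have hcoeffOne : ((m : ℝ) / k) ^ 2 * k * (m - k) / (m * (m + 2) * (m - 1)) * A.trace =
      m / k * (m * (m - k) / ((m + 2) * (m - 1)) * (A.trace / m)) := by
    field_simp
  ext i j
  rw [of_apply, ← integral_matrix_apply hint, hinvW.integral_mul_transpose_mul_mul_transpose hW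
    (m := m) (k := k) (by rw [Fintype.card_fin]) (by rw [Fintype.card_fin]) hA, hcoeffA, hcoeffOne,
    smul_add, smul_smul, smul_smul]

end HaarK

lemma opNorm_smul_of_nonneg {m : ℕ} {c : ℝ} (hc : 0 ≤ c) (A : Matrix (Fin m) (Fin m) ℝ) :
    opNorm (c • A) = c * opNorm A := by
  rw [opNorm, opNorm, map_smul, norm_smul, Real.norm_of_nonneg hc]

/-- The haar-k Q-seminorm formula:
`‖E[Q Qᵀ A Q Qᵀ]‖ = (m/k)·‖(1−β)·A + β·(tr A/m)·I‖` for symmetric `A`, where `Q` is `√(m/k)`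
times the first `k` columns of a Haar-distributed orthogonal matrix and
`β = m(m−k)/((m+2)(m−1))`. -/
theorem haar_k_Q_seminorm (m k : ℕ) (hm : 2 ≤ m) (hk : 1 ≤ k) (hkm : k ≤ m)
    (A : Matrix (Fin m) (Fin m) ℝ) (hA : A.IsSymm)
    (μ : Measure (Fin m → Fin m → ℝ)) [IsProbabilityMeasure μ]
    (hsupp : μ {Q | (Matrix.of Q)ᵀ * (Matrix.of Q) = 1} = 1)
    (hinv : ∀ U : Matrix (Fin m) (Fin m) ℝ, Uᵀ * U = 1 →
      Measure.map (fun Q => Matrix.of.symm (U * Matrix.of Q)) μ = μ) :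
    opNorm (Matrix.of fun i j => ∫ Q,
        ((haarK k hkm Q) * (haarK k hkm Q)ᵀ * A * ((haarK k hkm Q) * (haarK k hkm Q)ᵀ)) i j ∂μ) =
      ((m : ℝ) / k) *
        opNorm
          ((1 - ((m : ℝ) * ((m : ℝ) - (k : ℝ))) / (((m : ℝ) + 2) * ((m : ℝ) - 1))) • A +
            ((((m : ℝ) * ((m : ℝ) - (k : ℝ))) / (((m : ℝ) + 2) * ((m : ℝ) - 1))) *
              (Matrix.trace A / m)) • (1 : Matrix (Fin m) (Fin m) ℝ)) := by
  rw [integral_haarK_mul_transpose_mul_mul_transpose hkm hm hk hA hsupp hinv,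
    opNorm_smul_of_nonneg (by positivity)]
end

section
/- Let m ≥ 1, k ≥ 1, and g ∈ ℝᵐ. Let Q be a random m×k matrix whose entries are independent centered normal random variables with standard deviation 1/√k. Then E[‖g − Q Qᵀ g‖²] = ((m+1)/k)·‖g‖². In particular, the norm-k compressor is an ω-unbiased compressor with ω = (m+1)/k. -/
open Matrix MeasureTheory ProbabilityTheory

/-!
The `i`-th coordinate of `Q Qᵀ g` is `Zᵢ = ∑ⱼ Qᵢⱼ (Qᵀ g)ⱼ`, a sum of products of two centered
jointly Gaussian linear functionals of `Q`. Isserlis' formula expresses the mean and variance of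
such a sum through the covariances of the functionals; these vanish unless the column indices
agree, and what is left is `E Zᵢ = k v gᵢ` and `Var Zᵢ = k v² (‖g‖² + gᵢ²)` for entries of variance
`v`. The bias-variance decomposition of `E (gᵢ - Zᵢ)²`, summed over `i`, gives the result.

Isserlis' formula for four functionals follows by polarization from the fourth moment of one real
Gaussian, which comes from differentiating `M' = (μ + v t) M`, with `M` the moment generating
function.
-/

open scoped NNReal ENNReal

lemma integral_pow_add_two_gaussianReal (μ : ℝ) (v : ℝ≥0) (n : ℕ) :
    ∫ x, x ^ (n + 2) ∂gaussianReal μ v =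
      μ * ∫ x, x ^ (n + 1) ∂gaussianReal μ v + (n + 1) * v * ∫ x, x ^ n ∂gaussianReal μ v := by
  set M : ℝ → ℝ := mgf (fun x ↦ x) (gaussianReal μ v)
  have moment_eq (k : ℕ) : ∫ x, x ^ k ∂gaussianReal μ v = iteratedDeriv k M 0 := by
    simpa using (iteratedDeriv_mgf_zero (μ := gaussianReal μ v) (X := fun x ↦ x) (by simp) k).symm
  have M_eq : M = fun t ↦ Real.exp (μ * t + v * t ^ 2 / 2) := mgf_fun_id_gaussianReal
  have contDiff_M : ContDiff ℝ (n + 1 : ℕ) M := by rw [M_eq]; fun_prop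
  have deriv_M : deriv M = fun t ↦ (μ + v * t) * M t := by
    ext t
    have h : HasDerivAt (fun t : ℝ ↦ μ * t + v * t ^ 2 / 2) (μ + v * t) t := by
      convert! ((hasDerivAt_id t).const_mul μ).add
        (((hasDerivAt_pow 2 t).const_mul (v : ℝ)).div_const 2) using 1
      simp only [mul_one, Nat.cast_ofNat, Nat.add_one_sub_one, pow_one, add_right_inj]
      ring
    rw [M_eq, h.exp.deriv, mul_comm]
  have deriv_affine : deriv (fun t : ℝ ↦ μ + v * t) = fun _ ↦ (v : ℝ) := by
    ext t; simp
  -- The Leibniz rule has only two nonzero terms, since `μ + v t` is affine.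
  rw [moment_eq, moment_eq, moment_eq, iteratedDeriv_succ', deriv_M,
    iteratedDeriv_fun_mul (by fun_prop) contDiff_M.contDiffAt, Finset.sum_range_succ',
    Finset.sum_range_succ']
  simp only [iteratedDeriv_succ', deriv_affine, deriv_const', iteratedDeriv_fun_const_zero,
    mul_zero, Nat.reduceSubDiff, zero_mul, Finset.sum_const_zero, zero_add, Nat.choose_one_right,
    Nat.cast_add, Nat.cast_one, iteratedDeriv_zero, add_tsub_cancel_right, Nat.choose_zero_right,
    add_zero, one_mul, tsub_zero]
  ring

lemma integral_pow_four_gaussianReal_zero (v : ℝ≥0) :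
    ∫ x, x ^ 4 ∂gaussianReal 0 v = 3 * v ^ 2 := by
  have second : ∫ x, x ^ 2 ∂gaussianReal 0 v = v := by
    simpa using integral_pow_add_two_gaussianReal 0 v 0
  rw [integral_pow_add_two_gaussianReal, second]
  push_cast
  ring

-- In the signed sum only `a b c d` survives, with coefficient `8 · 4! = 192`.
open Finset in
lemma mul_mul_mul_eq_sum_signs_pow_four (a b c d : ℝ) :
    a * b * (c * d) = (∑ ε ∈ ({1, -1} ×ˢ {1, -1} ×ˢ {1, -1} : Finset (ℝ × ℝ × ℝ)),
      ε.1 * ε.2.1 * ε.2.2 * (a + ε.1 * b + ε.2.1 * c + ε.2.2 * d) ^ 4) / 192 := by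
  simp only [sum_product, sum_pair (show (1 : ℝ) ≠ -1 by norm_num)]
  ring

section Isserlis

variable {E : Type*} [NormedAddCommGroup E] [NormedSpace ℝ E] [MeasurableSpace E]
  [BorelSpace E] {μ : Measure E} [IsGaussian μ]

lemma memLp_two_dual_mul_dual (L₁ L₂ : StrongDual ℝ E) : MemLp (fun x ↦ L₁ x * L₂ x) 2 μ := by
  have : ENNReal.HolderTriple 4 4 2 := .of_toReal ⟨by norm_num, by norm_num, by norm_num⟩
  exact (IsGaussian.memLp_dual μ L₂ 4 (by simp)).mul' (IsGaussian.memLp_dual μ L₁ 4 (by simp))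

lemma integrable_dual_pow_four (L : StrongDual ℝ E) : Integrable (fun x ↦ L x ^ 4) μ := by
  refine (memLp_two_dual_mul_dual L L).integrable_sq.congr (.of_forall fun x ↦ ?_)
  ring

variable [CompleteSpace E] [SecondCountableTopology E]

lemma integral_dual_eq_zero (hμ : ∫ x, x ∂μ = 0) (L : StrongDual ℝ E) : μ[L] = 0 := by
  rw [IsGaussian.integral_dual, hμ, map_zero]

lemma integral_dual_mul_dual (hμ : ∫ x, x ∂μ = 0) (L₁ L₂ : StrongDual ℝ E) :
    ∫ x, L₁ x * L₂ x ∂μ = covarianceBilinDual μ L₁ L₂ := by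
  simp [covarianceBilinDual_apply IsGaussian.memLp_two_id, integral_dual_eq_zero hμ]

lemma integral_dual_pow_four (hμ : ∫ x, x ∂μ = 0) (L : StrongDual ℝ E) :
    ∫ x, L x ^ 4 ∂μ = 3 * covarianceBilinDual μ L L ^ 2 := by
  have law_L : μ.map L = gaussianReal 0 Var[L; μ].toNNReal := by
    rw [IsGaussian.map_eq_gaussianReal, integral_dual_eq_zero hμ]
  calc ∫ x, L x ^ 4 ∂μ = ∫ y, y ^ 4 ∂μ.map L :=
        (integral_map (f := fun y : ℝ ↦ y ^ 4) (by fun_prop) (by fun_prop)).symm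
    _ = 3 * covarianceBilinDual μ L L ^ 2 := by
        rw [law_L, integral_pow_four_gaussianReal_zero,
          Real.coe_toNNReal _ (variance_nonneg _ _),
          covarianceBilinDual_self_eq_variance IsGaussian.memLp_two_id]

open Finset in
theorem integral_dual_mul_mul_mul (hμ : ∫ x, x ∂μ = 0) (L₁ L₂ L₃ L₄ : StrongDual ℝ E) :
    ∫ x, L₁ x * L₂ x * (L₃ x * L₄ x) ∂μ =
      covarianceBilinDual μ L₁ L₂ * covarianceBilinDual μ L₃ L₄ +
      covarianceBilinDual μ L₁ L₃ * covarianceBilinDual μ L₂ L₄ +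
      covarianceBilinDual μ L₁ L₄ * covarianceBilinDual μ L₂ L₃ := by
  let S (ε : ℝ × ℝ × ℝ) : StrongDual ℝ E := L₁ + ε.1 • L₂ + ε.2.1 • L₃ + ε.2.2 • L₄
  calc ∫ x, L₁ x * L₂ x * (L₃ x * L₄ x) ∂μ
      = ∫ x, (∑ ε ∈ ({1, -1} ×ˢ {1, -1} ×ˢ {1, -1} : Finset (ℝ × ℝ × ℝ)),
          ε.1 * ε.2.1 * ε.2.2 * S ε x ^ 4) / 192 ∂μ :=
        integral_congr_ae (.of_forall fun x ↦ mul_mul_mul_eq_sum_signs_pow_four ..)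
    _ = (∑ ε ∈ ({1, -1} ×ˢ {1, -1} ×ˢ {1, -1} : Finset (ℝ × ℝ × ℝ)),
          ε.1 * ε.2.1 * ε.2.2 * (3 * covarianceBilinDual μ (S ε) (S ε) ^ 2)) / 192 := by
        rw [integral_div,
          integral_finsetSum _ fun ε _ ↦ (integrable_dual_pow_four (S ε)).const_mul _]
        simp_rw [integral_const_mul, integral_dual_pow_four hμ]
    _ = _ := by
        simp only [S, sum_product, sum_pair (show (1 : ℝ) ≠ -1 by norm_num), map_add, map_smul,
          _root_.add_apply, _root_.smul_apply, smul_eq_mul,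
          covarianceBilinDual_comm L₂ L₁, covarianceBilinDual_comm L₃ L₁,
          covarianceBilinDual_comm L₃ L₂, covarianceBilinDual_comm L₄ _]
        ring

theorem covariance_dual_mul_dual (hμ : ∫ x, x ∂μ = 0) (L₁ L₂ L₃ L₄ : StrongDual ℝ E) :
    cov[fun x ↦ L₁ x * L₂ x, fun x ↦ L₃ x * L₄ x; μ] =
      covarianceBilinDual μ L₁ L₃ * covarianceBilinDual μ L₂ L₄ +
      covarianceBilinDual μ L₁ L₄ * covarianceBilinDual μ L₂ L₃ := by
  rw [covariance_eq_sub (memLp_two_dual_mul_dual L₁ L₂) (memLp_two_dual_mul_dual L₃ L₄),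
    integral_dual_mul_dual hμ, integral_dual_mul_dual hμ]
  simp only [Pi.mul_apply, integral_dual_mul_mul_mul hμ]
  ring

end Isserlis

section Pi

variable {ι : Type*} [Fintype ι]

instance isGaussian_pi {E : ι → Type*} [∀ i, NormedAddCommGroup (E i)]
    [∀ i, NormedSpace ℝ (E i)] [∀ i, CompleteSpace (E i)]
    [∀ i, SecondCountableTopology (E i)] [∀ i, MeasurableSpace (E i)] [∀ i, BorelSpace (E i)]
    (μ : ∀ i, Measure (E i)) [∀ i, IsGaussian (μ i)] : IsGaussian (Measure.pi μ) := by
  have h := (iIndepFun_pi (μ := μ) (X := fun i ↦ id) (by fun_prop)).hasGaussianLaw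
    fun i ↦ (measurePreserving_eval μ i).hasLaw.hasGaussianLaw
  simpa using h.isGaussian_map

lemma covariance_eval_pi {Ω : Type*} [DecidableEq ι] [MeasurableSpace Ω]
    {μ : Measure Ω} [IsProbabilityMeasure μ] {X Y : Ω → ℝ} (hX : MemLp X 2 μ) (hY : MemLp Y 2 μ)
    (i j : ι) :
    cov[fun ω ↦ X (ω i), fun ω ↦ Y (ω j); Measure.pi fun _ : ι ↦ μ] =
      if i = j then cov[X, Y; μ] else 0 := by
  have hi := measurePreserving_eval (fun _ : ι ↦ μ) i
  have hj := measurePreserving_eval (fun _ : ι ↦ μ) j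
  split_ifs with hij
  · subst hij
    have h := covariance_map_fun (hi.map_eq ▸ hX.1) (hi.map_eq ▸ hY.1) hi.aemeasurable
    rw [hi.map_eq] at h
    exact h.symm
  · have indep : (fun ω : ι → Ω ↦ ω i) ⟂ᵢ[Measure.pi fun _ ↦ μ] (fun ω ↦ ω j) :=
      (iIndepFun_pi (μ := fun _ : ι ↦ μ) (X := fun _ ↦ id) (by fun_prop)).indepFun hij
    have indep' : (fun ω ↦ X (ω i)) ⟂ᵢ[Measure.pi fun _ ↦ μ] (fun ω ↦ Y (ω j)) :=
      indep.comp₀ hi.aemeasurable hj.aemeasurable (by rw [hi.map_eq]; exact hX.1.aemeasurable)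
        (by rw [hj.map_eq]; exact hY.1.aemeasurable)
    exact indep'.covariance_eq_zero (hX.comp_measurePreserving hi) (hY.comp_measurePreserving hj)

end Pi

section GaussianMatrix

variable {ι κ : Type*}

/-- The `(i, j)` entry of a matrix, as a linear functional. -/
def entryCLM (i : ι) (j : κ) : StrongDual ℝ (ι → κ → ℝ) :=
  ContinuousLinearMap.proj (R := ℝ) (φ := fun _ : κ ↦ ℝ) j ∘L ContinuousLinearMap.proj i

lemma entryCLM_apply (i : ι) (j : κ) (Q : ι → κ → ℝ) : entryCLM i j Q = Q i j := rfl

variable [Fintype ι]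

/-- The `j`-th coordinate of `Qᵀ g`, as a linear functional of the matrix `Q`. -/
def transposeMulVecCLM (g : ι → ℝ) (j : κ) : StrongDual ℝ (ι → κ → ℝ) :=
  ∑ l, g l • entryCLM l j

lemma transposeMulVecCLM_apply (g : ι → ℝ) (j : κ) (Q : ι → κ → ℝ) :
    transposeMulVecCLM g j Q = ((of Q)ᵀ *ᵥ g) j := by
  simp [transposeMulVecCLM, entryCLM_apply, mulVec, dotProduct, mul_comm]

variable [Fintype κ]

lemma mul_transpose_mulVec_apply (Q : ι → κ → ℝ) (g : ι → ℝ) (i : ι) :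
    ((of Q * (of Q)ᵀ) *ᵥ g) i = ∑ j, entryCLM i j Q * transposeMulVecCLM g j Q := by
  simp only [← mulVec_mulVec, entryCLM_apply, transposeMulVecCLM_apply]
  rfl

/-- The law of a random `ι × κ` matrix whose entries are independent centered Gaussians of
variance `v`. -/
noncomputable abbrev gaussianMatrix (ι κ : Type*) [Fintype ι] [Fintype κ] (v : ℝ≥0) :
    Measure (ι → κ → ℝ) :=
  Measure.pi fun _ ↦ Measure.pi fun _ ↦ gaussianReal 0 v

lemma integral_gaussianMatrix (v : ℝ≥0) : ∫ Q, Q ∂gaussianMatrix ι κ v = 0 := by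
  ext i j
  calc (∫ Q, Q ∂gaussianMatrix ι κ v) i j
      = ∫ Q, Q i j ∂gaussianMatrix ι κ v := (IsGaussian.integral_dual (entryCLM i j)).symm
    _ = ∫ q, q j ∂Measure.pi fun _ : κ ↦ gaussianReal 0 v :=
        integral_comp_eval (μ := fun _ : ι ↦ Measure.pi fun _ : κ ↦ gaussianReal 0 v)
          (measurable_pi_apply j).aestronglyMeasurable
    _ = 0 := by rw [integral_eval, integral_id_gaussianReal]

section Covariance

variable [DecidableEq κ]

lemma covarianceBilinDual_entryCLM [DecidableEq ι] (v : ℝ≥0) (i l : ι) (j n : κ) :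
    covarianceBilinDual (gaussianMatrix ι κ v) (entryCLM i j) (entryCLM l n) =
      if i = l ∧ j = n then (v : ℝ) else 0 := by
  have memLp_eval (j : κ) : MemLp (fun q : κ → ℝ ↦ q j) 2 (Measure.pi fun _ ↦ gaussianReal 0 v) :=
    IsGaussian.memLp_two_id.comp_measurePreserving (measurePreserving_eval _ j)
  have cov_row : cov[fun q ↦ q j, fun q ↦ q n; Measure.pi fun _ : κ ↦ gaussianReal 0 v] =
      if j = n then (v : ℝ) else 0 := by
    rw [covariance_eval_pi (X := fun x ↦ x) (Y := fun x ↦ x) IsGaussian.memLp_two_id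
      IsGaussian.memLp_two_id, covariance_self aemeasurable_id', variance_fun_id_gaussianReal]
  calc covarianceBilinDual (gaussianMatrix ι κ v) (entryCLM i j) (entryCLM l n)
      = cov[fun Q ↦ Q i j, fun Q ↦ Q l n; gaussianMatrix ι κ v] :=
        covarianceBilinDual_eq_covariance IsGaussian.memLp_two_id _ _
    _ = if i = l ∧ j = n then (v : ℝ) else 0 := by
        rw [covariance_eval_pi (memLp_eval j) (memLp_eval n), cov_row, ite_and]

lemma covarianceBilinDual_entryCLM_transposeMulVecCLM (v : ℝ≥0) (g : ι → ℝ) (i : ι) (j n : κ) :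
    covarianceBilinDual (gaussianMatrix ι κ v) (entryCLM i j) (transposeMulVecCLM g n) =
      if j = n then v * g i else 0 := by
  classical
  simp [transposeMulVecCLM, covarianceBilinDual_entryCLM, ite_and, mul_comm]

lemma covarianceBilinDual_transposeMulVecCLM (v : ℝ≥0) (g : ι → ℝ) (j n : κ) :
    covarianceBilinDual (gaussianMatrix ι κ v) (transposeMulVecCLM g j) (transposeMulVecCLM g n) =
      if j = n then v * ∑ l, g l ^ 2 else 0 := by
  calc covarianceBilinDual (gaussianMatrix ι κ v) (transposeMulVecCLM g j) (transposeMulVecCLM g n)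
      = ∑ l, g l * covarianceBilinDual (gaussianMatrix ι κ v) (entryCLM l j)
          (transposeMulVecCLM g n) := by
        rw [show transposeMulVecCLM g j = ∑ l, g l • entryCLM l j from rfl]
        simp only [map_sum, map_smul, _root_.sum_apply, _root_.smul_apply, smul_eq_mul]
    _ = if j = n then v * ∑ l, g l ^ 2 else 0 := by
        simp only [covarianceBilinDual_entryCLM_transposeMulVecCLM]
        split_ifs
        · rw [Finset.mul_sum]
          exact Finset.sum_congr rfl fun l _ ↦ by ring
        · simp only [mul_zero, Finset.sum_const_zero]

end Covariance

lemma memLp_two_mul_transpose_mulVec (v : ℝ≥0) (g : ι → ℝ) (i : ι) :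
    MemLp (fun Q ↦ ((of Q * (of Q)ᵀ) *ᵥ g) i) 2 (gaussianMatrix ι κ v) := by
  simp only [mul_transpose_mulVec_apply]
  exact memLp_finsetSum _ fun j _ ↦ memLp_two_dual_mul_dual _ _

lemma integral_mul_transpose_mulVec (v : ℝ≥0) (g : ι → ℝ) (i : ι) :
    ∫ Q, ((of Q * (of Q)ᵀ) *ᵥ g) i ∂gaussianMatrix ι κ v = Fintype.card κ * v * g i := by
  classical
  simp only [mul_transpose_mulVec_apply]
  rw [integral_finsetSum _ fun j _ ↦ (memLp_two_dual_mul_dual _ _).integrable one_le_two]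
  simp [integral_dual_mul_dual (integral_gaussianMatrix v),
    covarianceBilinDual_entryCLM_transposeMulVecCLM, mul_assoc]

lemma variance_mul_transpose_mulVec (v : ℝ≥0) (g : ι → ℝ) (i : ι) :
    Var[fun Q ↦ ((of Q * (of Q)ᵀ) *ᵥ g) i; gaussianMatrix ι κ v] =
      Fintype.card κ * v ^ 2 * (∑ l, g l ^ 2 + g i ^ 2) := by
  classical
  have cov_eq (j n : κ) :
      cov[fun Q ↦ entryCLM i j Q * transposeMulVecCLM g j Q,
        fun Q ↦ entryCLM i n Q * transposeMulVecCLM g n Q; gaussianMatrix ι κ v] =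
      if j = n then v ^ 2 * (∑ l, g l ^ 2 + g i ^ 2) else 0 := by
    rw [covariance_dual_mul_dual (integral_gaussianMatrix v),
      covarianceBilinDual_comm (transposeMulVecCLM g j) (entryCLM i n),
      covarianceBilinDual_entryCLM, covarianceBilinDual_transposeMulVecCLM,
      covarianceBilinDual_entryCLM_transposeMulVecCLM,
      covarianceBilinDual_entryCLM_transposeMulVecCLM]
    by_cases hjn : j = n
    · simp only [hjn, and_self, if_true]
      ring
    · simp [hjn]
  simp only [mul_transpose_mulVec_apply]
  rw [variance_fun_sum' fun j _ ↦ memLp_two_dual_mul_dual _ _]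
  simp only [cov_eq, Finset.sum_ite_eq, Finset.mem_univ, if_true, Finset.sum_const,
    Finset.card_univ, nsmul_eq_mul, mul_assoc]

lemma memLp_two_sub_mul_transpose_mulVec (v : ℝ≥0) (g : ι → ℝ) (i : ι) :
    MemLp (fun Q ↦ g i - ((of Q * (of Q)ᵀ) *ᵥ g) i) 2 (gaussianMatrix ι κ v) :=
  (memLp_const (g i)).sub (memLp_two_mul_transpose_mulVec v g i)

lemma integral_sq_sub_mul_transpose_mulVec (v : ℝ≥0) (g : ι → ℝ) (i : ι) :
    ∫ Q, (g i - ((of Q * (of Q)ᵀ) *ᵥ g) i) ^ 2 ∂gaussianMatrix ι κ v =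
      (1 - Fintype.card κ * v) ^ 2 * g i ^ 2 +
        Fintype.card κ * v ^ 2 * (∑ l, g l ^ 2 + g i ^ 2) := by
  have memLp_two := memLp_two_mul_transpose_mulVec (κ := κ) v g i
  have bias_variance := variance_eq_sub (memLp_two_sub_mul_transpose_mulVec (κ := κ) v g i)
  rw [variance_const_sub memLp_two.1, variance_mul_transpose_mulVec,
    integral_sub (integrable_const _) (memLp_two.integrable one_le_two),
    integral_mul_transpose_mulVec, integral_const, probReal_univ, one_smul] at bias_variance
  simp only [Pi.pow_apply] at bias_variance
  linear_combination -bias_variance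

theorem norm_k_omega_unbiased_general [DecidableEq ι] (v : ℝ≥0) (g : EuclideanSpace ℝ ι) :
    ∫ Q, ‖g - Matrix.toEuclideanLin (of Q * (of Q)ᵀ) g‖ ^ 2 ∂gaussianMatrix ι κ v =
      ((1 - Fintype.card κ * v) ^ 2 + Fintype.card κ * v ^ 2 * (Fintype.card ι + 1)) *
        ‖g‖ ^ 2 := by
  calc ∫ Q, ‖g - Matrix.toEuclideanLin (of Q * (of Q)ᵀ) g‖ ^ 2 ∂gaussianMatrix ι κ v
      = ∫ Q, ∑ i, (g i - ((of Q * (of Q)ᵀ) *ᵥ g) i) ^ 2 ∂gaussianMatrix ι κ v := by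
        simp only [EuclideanSpace.real_norm_sq_eq, PiLp.sub_apply, Matrix.toLpLin_apply]
    _ = ∑ i, ((1 - Fintype.card κ * v) ^ 2 * g i ^ 2 +
          Fintype.card κ * v ^ 2 * (∑ l, g l ^ 2 + g i ^ 2)) := by
        rw [integral_finsetSum _ fun i _ ↦ (memLp_two_sub_mul_transpose_mulVec v _ i).integrable_sq]
        simp only [integral_sq_sub_mul_transpose_mulVec]
    _ = ((1 - Fintype.card κ * v) ^ 2 + Fintype.card κ * v ^ 2 * (Fintype.card ι + 1)) *
          ‖g‖ ^ 2 := by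
        simp only [EuclideanSpace.real_norm_sq_eq, Finset.sum_add_distrib, ← Finset.mul_sum,
          Finset.sum_const, Finset.card_univ, nsmul_eq_mul]
        ring

end GaussianMatrix

/-- For a random `m × k` matrix `Q` with i.i.d. centered Gaussian entries of
variance `1/k` and any `g ∈ ℝᵐ`, `E[‖g − Q Qᵀ g‖²] = ((m+1)/k)·‖g‖²`: the norm-k compressor
is `ω`-unbiased with `ω = (m+1)/k`. -/
theorem norm_k_omega_unbiased (m k : ℕ) (hm : 1 ≤ m) (hk : 1 ≤ k)
    (g : EuclideanSpace ℝ (Fin m)) :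
    ∫ Q, ‖g - Matrix.toEuclideanLin ((Matrix.of Q) * (Matrix.of Q)ᵀ) g‖ ^ 2
        ∂(Measure.pi fun _ : Fin m => Measure.pi fun _ : Fin k =>
            gaussianReal 0 ((k : NNReal))⁻¹) =
      (((m : ℝ) + 1) / k) * ‖g‖ ^ 2 := by
  have hk₀ : (k : ℝ) ≠ 0 := by positivity
  rw [norm_k_omega_unbiased_general]
  simp only [Fintype.card_fin, NNReal.coe_inv, NNReal.coe_natCast]
  field_simp
  ring
end
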